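/- Let n ≥ m ≥ 2, let r = X_a s ∈ uR^X_m and r' = X_b s' ∈ uR^X_{m-1} be rankers starting with X-letters, with |r| + |r'| ≤ n. Let u, v ∈ A* be such that r and r' are condensed on both u and v. If u ⊳_{m,n} v, then ord(r(u), r'(u)) = ord(r(v), r'(v)). Dually, if r ∈ uR^Y_m and r' ∈ uR^Y_{m-1} start with Y-letters, |r| + |r'| ≤ n, r and r' are condensed on u and v, and u ⊲_{m,n} v, then ord(r(u), r'(u)) = ord(r(v), r'(v)). -/

import Mathlib

namespace RankerPaper

variable {A : Type*} [DecidableEq A]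

/-- Letters of rankers: `X a` ("next `a` to the right") and `Y a` ("next `a` to the left"). -/
inductive RLetter (A : Type*) where
  | X : A → RLetter A
  | Y : A → RLetter A
  deriving DecidableEq

/-- Least `a`-position of `u` strictly greater than `q` (positions are 1-indexed). -/
def nextOcc (u : List A) (a : A) (q : ℕ) : Option ℕ :=
  ((List.range (u.length + 2)).filter (fun i => decide (q < i ∧ u[i-1]? = some a))).head?

/-- Greatest `a`-position of `u` strictly less than `q` (positions are 1-indexed). -/
def prevOcc (u : List A) (a : A) (q : ℕ) : Option ℕ :=
  ((List.range (u.length + 2)).filter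
    (fun i => decide (1 ≤ i ∧ i < q ∧ u[i-1]? = some a))).getLast?

/-- One evaluation step of a ranker letter from position `q`. -/
def stepR (u : List A) : RLetter A → ℕ → Option ℕ
  | .X a, q => nextOcc u a q
  | .Y a, q => prevOcc u a q

/-- Evaluation of a ranker from position `q`, processing letters left to right. -/
def evalFrom (u : List A) : List (RLetter A) → ℕ → Option ℕ
  | [], q => some q
  | z :: r, q => (stepR u z q).bind (evalFrom u r)

/-- Starting position: `0` for an `X`-letter, `|u|+1` for a `Y`-letter. -/
def startPos (u : List A) : RLetter A → ℕ
  | .X _ => 0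
  | .Y _ => u.length + 1

/-- The position `r(u)` defined by the ranker `r` on `u` (`none` if undefined;
empty rankers are considered undefined, rankers being nonempty words). -/
def evalR (u : List A) (r : List (RLetter A)) : Option ℕ :=
  match r with
  | [] => none
  | z :: t => evalFrom u (z :: t) (startPos u z)

/-- `r` is defined on `u`. -/
def Defined (u : List A) (r : List (RLetter A)) : Prop := (evalR u r).isSome

/-- The position `r(u)` (defaulting to `0` when undefined). -/
def pos (u : List A) (r : List (RLetter A)) : ℕ := (evalR u r).getD 0

/-- Do two ranker letters have the same direction? -/
def sameDir : RLetter A → RLetter A → Bool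
  | .X _, .X _ => true
  | .Y _, .Y _ => true
  | _, _ => false

/-- Number of (alternating) blocks of a ranker. -/
def numBlocks : List (RLetter A) → ℕ
  | [] => 0
  | [_] => 1
  | z :: w :: t => (if sameDir z w then 0 else 1) + numBlocks (w :: t)

def startsX (r : List (RLetter A)) : Prop := ∃ a t, r = RLetter.X a :: t
def startsY (r : List (RLetter A)) : Prop := ∃ a t, r = RLetter.Y a :: t
def endsX (r : List (RLetter A)) : Prop := ∃ a, r.getLast? = some (RLetter.X a)
def endsY (r : List (RLetter A)) : Prop := ∃ a, r.getLast? = some (RLetter.Y a)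

/-- `R^X_{m,n}`: rankers with exactly `m` blocks, depth `n`, starting with an `X`-block. -/
def RX (m n : ℕ) (r : List (RLetter A)) : Prop :=
  numBlocks r = m ∧ r.length = n ∧ startsX r

/-- `R^Y_{m,n}`: rankers with exactly `m` blocks, depth `n`, starting with a `Y`-block. -/
def RY (m n : ℕ) (r : List (RLetter A)) : Prop :=
  numBlocks r = m ∧ r.length = n ∧ startsY r

/-- `uR^X_{m,n}`. -/
def uRX (m n : ℕ) (r : List (RLetter A)) : Prop :=
  (∃ m' n', m' ≤ m ∧ n' ≤ n ∧ RX m' n' r) ∨ (∃ m' n', m' < m ∧ n' < n ∧ RY m' n' r)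

/-- `uR^Y_{m,n}`. -/
def uRY (m n : ℕ) (r : List (RLetter A)) : Prop :=
  (∃ m' n', m' ≤ m ∧ n' ≤ n ∧ RY m' n' r) ∨ (∃ m' n', m' < m ∧ n' < n ∧ RX m' n' r)

/-- `uR_{m,n} = uR^X_{m,n} ∪ uR^Y_{m,n}`. -/
def uR (m n : ℕ) (r : List (RLetter A)) : Prop := uRX m n r ∨ uRY m n r

/-- `uR^X_m = ∪_{n ≥ m} uR^X_{m,n}`. -/
def uRXm (m : ℕ) (r : List (RLetter A)) : Prop := ∃ n, m ≤ n ∧ uRX m n r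

/-- `uR^Y_m = ∪_{n ≥ m} uR^Y_{m,n}`. -/
def uRYm (m : ℕ) (r : List (RLetter A)) : Prop := ∃ n, m ≤ n ∧ uRY m n r

/-- `r = Z₁ ⋯ Z_n` is condensed on `u`: it is defined on `u` and there is a chain of
open intervals `(0;|u|+1) = (i₀;j₀) ⊃ (i₁;j₁) ⊃ ⋯ ⊃ (i_{n-1};j_{n-1}) ∋ r(u)`
updated according to the pairs `Z_ℓ Z_{ℓ+1}`. -/
def Condensed (u : List A) (r : List (RLetter A)) : Prop :=
  ∃ (p : ℕ) (i j : ℕ → ℕ),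
    evalR u r = some p ∧
    i 0 = 0 ∧ j 0 = u.length + 1 ∧
    (∀ ℓ a b, 1 ≤ ℓ → r[ℓ-1]? = some (RLetter.X a) → r[ℓ]? = some (RLetter.X b) →
        nextOcc u a (i (ℓ-1)) = some (i ℓ) ∧ j ℓ = j (ℓ-1)) ∧
    (∀ ℓ a b, 1 ≤ ℓ → r[ℓ-1]? = some (RLetter.Y a) → r[ℓ]? = some (RLetter.Y b) →
        i ℓ = i (ℓ-1) ∧ prevOcc u a (j (ℓ-1)) = some (j ℓ)) ∧
    (∀ ℓ a b, 1 ≤ ℓ → r[ℓ-1]? = some (RLetter.X a) → r[ℓ]? = some (RLetter.Y b) →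
        i ℓ = i (ℓ-1) ∧ nextOcc u a (i (ℓ-1)) = some (j ℓ)) ∧
    (∀ ℓ a b, 1 ≤ ℓ → r[ℓ-1]? = some (RLetter.Y a) → r[ℓ]? = some (RLetter.X b) →
        prevOcc u a (j (ℓ-1)) = some (i ℓ) ∧ j ℓ = j (ℓ-1)) ∧
    (∀ ℓ, 1 ≤ ℓ → ℓ < r.length →
        i (ℓ-1) ≤ i ℓ ∧ j ℓ ≤ j (ℓ-1) ∧ (i (ℓ-1) < i ℓ ∨ j ℓ < j (ℓ-1))) ∧
    i (r.length - 1) < p ∧ p < j (r.length - 1)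

/-- `u` and `v` agree on rankers from the set `R`. -/
def AgreeDef (R : List (RLetter A) → Prop) (u v : List A) : Prop :=
  ∀ r, R r → (Defined u r ↔ Defined v r)

/-- `u` and `v` agree on condensed rankers from the set `R`. -/
def AgreeCond (R : List (RLetter A) → Prop) (u v : List A) : Prop :=
  ∀ r, R r → (Condensed u r ↔ Condensed v r)

/-- `u ⊳_{m,n} v`. -/
def trir (m n : ℕ) (u v : List A) : Prop := AgreeCond (uRX m n) u v

/-- `u ⊲_{m,n} v`. -/
def tril (m n : ℕ) (u v : List A) : Prop := AgreeCond (uRY m n) u v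

/-- The alphabet (set of letters) of a word. -/
def alph (u : List A) : Finset A := u.toFinset

/-- Condition (WI 1). -/
def WI1 (m n : ℕ) (u v : List A) : Prop := AgreeDef (uR m n) u v

/-- Condition (WI 2). -/
def WI2 (m n : ℕ) (u v : List A) : Prop :=
  ∀ r r', uR m n r → uR (m-1) (n-1) r' →
    Defined u r → Defined v r → Defined u r' → Defined v r' →
    compare (pos u r) (pos u r') = compare (pos v r) (pos v r')

/-- Condition (WI 3). -/
def WI3 (m n : ℕ) (u v : List A) : Prop :=
  ∀ r r', uR m n r → uR m (n-1) r' →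
    ((endsX r ∧ endsY r') ∨ (endsY r ∧ endsX r')) →
    Defined u r → Defined v r → Defined u r' → Defined v r' →
    compare (pos u r) (pos u r') = compare (pos v r) (pos v r')

/-- Condition (WI 1c). -/
def WI1c (m n : ℕ) (u v : List A) : Prop := AgreeCond (uR m n) u v

/-- Condition (WI 2c). -/
def WI2c (m n : ℕ) (u v : List A) : Prop :=
  ∀ r r', uR m n r → uR (m-1) (n-1) r' →
    Condensed u r → Condensed v r → Condensed u r' → Condensed v r' →
    compare (pos u r) (pos u r') = compare (pos v r) (pos v r')

/-- Condition (WI 3c). -/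
def WI3c (m n : ℕ) (u v : List A) : Prop :=
  ∀ r r', uR m n r → uR m (n-1) r' →
    ((endsX r ∧ endsY r') ∨ (endsY r ∧ endsX r')) →
    Condensed u r → Condensed v r → Condensed u r' → Condensed v r' →
    compare (pos u r) (pos u r') = compare (pos v r) (pos v r')

/-!
Let `x` and `y` be the positions selected by the first letters of the two rankers. Looking back from
`y` for the letter at `x` is a ranker with at most two blocks, so `x` and `y` occur in the same order
on both words; say `x` comes first in the common direction. The run of the other ranker is then
followed from `x` by a suffix of it: as long as the run stays on one side of `x`, each new letter is
appended to the suffix, and when it jumps across `x`, the suffix is reset to the new letter, or to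
the empty ranker if the run lands on `x`. Whether a jump occurs is visible in the condensedness of a
ranker with few blocks, so the same suffix serves both words.

This replaces the two rankers by two with a common first letter. If they do not both continue on the
same side of `x`, then `x` decides the comparison. Otherwise the first letter is removed and the
argument is repeated in the interval on that side of `x`; a block is lost exactly when the direction
changes, and then it is lost from both rankers and from the bound `m`.
-/

section Rankers

variable {α P : Type*} {z z' : RLetter α} {w w' s : List (RLetter α)}

/-- The letter of the alphabet a ranker letter searches for. -/
def RLetter.letter : RLetter α → α
  | .X a => a
  | .Y a => a

/-- The ranker letter searching for the same letter of the alphabet in the other direction. -/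
def RLetter.opposite : RLetter α → RLetter α
  | .X a => .Y a
  | .Y a => .X a

/-- The side of `x` inside the interval `I` that a ranker letter evaluated from `x` looks at. A pair
`I` stands for the open interval `Set.Ioo I.1 I.2`. -/
def narrow : RLetter α → P × P → P → P × P
  | .X _, I, x => (x, I.2)
  | .Y _, I, x => (I.1, x)

theorem RLetter.eq_of_sameDir (h : sameDir z z') (hl : z.letter = z'.letter) : z = z' := by
  cases z <;> cases z' <;> simp_all [sameDir, letter]

theorem sameDir_comm (z z' : RLetter α) : sameDir z z' = sameDir z' z := by
  cases z <;> cases z' <;> rfl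

theorem sameDir_congr_left (h : sameDir z z') (t : RLetter α) : sameDir z t = sameDir z' t := by
  cases z <;> cases z' <;> cases t <;> trivial

theorem narrow_congr_sameDir (h : sameDir z z') (I : P × P) (x : P) :
    narrow z I x = narrow z' I x := by
  cases z <;> cases z' <;> trivial

theorem one_le_numBlocks_cons (z : RLetter α) (w : List (RLetter α)) :
    1 ≤ numBlocks (z :: w) := by
  induction w generalizing z with
  | nil => exact le_rfl
  | cons t w ih => exact (ih t).trans (Nat.le_add_left _ _)

theorem numBlocks_le_cons (z : RLetter α) (w : List (RLetter α)) :
    numBlocks w ≤ numBlocks (z :: w) := by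
  cases w with
  | nil => exact Nat.zero_le _
  | cons t w => exact Nat.le_add_left _ _

theorem numBlocks_cons_le (z : RLetter α) (w : List (RLetter α)) :
    numBlocks (z :: w) ≤ 1 + numBlocks w := by
  cases w with
  | nil => exact le_rfl
  | cons t w => exact Nat.add_le_add_right (by split <;> simp) _

theorem numBlocks_le_of_prefix (h : w <+: w') : numBlocks w ≤ numBlocks w' := by
  induction w generalizing w' with
  | nil => exact Nat.zero_le _
  | cons z w ih =>
    obtain ⟨w', rfl, hw⟩ := List.cons_prefix_iff.1 h
    cases w with
    | nil => exact one_le_numBlocks_cons z w'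
    | cons t w =>
      obtain ⟨w', rfl, -⟩ := List.cons_prefix_iff.1 hw
      exact Nat.add_le_add_left (ih hw) _

theorem numBlocks_cons_le_of_infix (hz : sameDir z z') (h : w <:+: z' :: s) :
    numBlocks (z :: w) ≤ numBlocks (z' :: s) := by
  induction s generalizing z z' with
  | nil =>
    obtain rfl | rfl : w = [] ∨ w = [z'] := by
      simpa [List.infix_cons_iff, List.prefix_cons_iff, or_comm] using h
    · exact le_rfl
    · simp [numBlocks, hz]
  | cons t s ih =>
    obtain h | h := List.infix_cons_iff.1 h
    · obtain rfl | ⟨w, rfl, -⟩ := List.prefix_cons_iff.1 h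
      · exact one_le_numBlocks_cons _ _
      · simpa [numBlocks, hz] using numBlocks_le_of_prefix h
    · by_cases ht : sameDir z' t
      · simpa [numBlocks, ht] using ih (sameDir_congr_left hz t ▸ ht) h
      · have hw : numBlocks w ≤ numBlocks (t :: s) :=
          (numBlocks_le_cons t w).trans (ih (by cases t <;> rfl) h)
        simpa [numBlocks, ht] using (numBlocks_cons_le z w).trans (Nat.add_le_add_left hw 1)

end Rankers

section OrderedWords

variable {α P : Type*} [LinearOrder P] {f : P → Option α} {I J K L : P × P} {p q x y : P}
  {z z' z₀ : RLetter α} {w : List (RLetter α)}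

/-- The occurrence a ranker letter points to inside the open interval `Set.Ioo I.1 I.2` of a
word `f`, the word having letter `a` at `p` when `f p = some a`. -/
def Selects (f : P → Option α) : RLetter α → P × P → P → Prop
  | .X a, I, p => IsLeast (Set.Ioo I.1 I.2 ∩ f ⁻¹' {some a}) p
  | .Y a, I, p => IsGreatest (Set.Ioo I.1 I.2 ∩ f ⁻¹' {some a}) p

/-- `CondensedAt f r I J p`: the nonempty ranker `r`, started in the interval `I`, runs through a
decreasing chain of intervals, its last letter selecting `p` inside the last interval `J`. -/
inductive CondensedAt (f : P → Option α) : List (RLetter α) → P × P → P × P → P → Prop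
  | single {z : RLetter α} {I : P × P} {p : P} : Selects f z I p → CondensedAt f [z] I I p
  | cons {z z' : RLetter α} {w : List (RLetter α)} {I J : P × P} {x p : P} : Selects f z I x →
      CondensedAt f (z' :: w) (narrow z' I x) J p → CondensedAt f (z :: z' :: w) I J p

/-- Relative to the interval `I`, the ranker `r` is condensed with value `p`. -/
def Reaches (f : P → Option α) (r : List (RLetter α)) (I : P × P) (p : P) : Prop :=
  ∃ J, CondensedAt f r I J p

/-- Condensedness of a ranker relative to the interval `I`. -/
def CondensedIn (f : P → Option α) (r : List (RLetter α)) (I : P × P) : Prop :=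
  ∃ p, Reaches f r I p

theorem Selects.mem_Ioo (h : Selects f z I p) : p ∈ Set.Ioo I.1 I.2 := by
  cases z <;> exact h.1.1

theorem Selects.unique (hp : Selects f z I p) (hq : Selects f z I q) : p = q := by
  cases z
  · exact IsLeast.unique hp hq
  · exact IsGreatest.unique hp hq

theorem Selects.of_subset (h : Selects f z I p) (hKI : Set.Ioo K.1 K.2 ⊆ Set.Ioo I.1 I.2)
    (hp : p ∈ Set.Ioo K.1 K.2) : Selects f z K p := by
  cases z <;> exact ⟨⟨hp, h.1.2⟩, fun q hq => h.2 ⟨hKI hq.1, hq.2⟩⟩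

theorem Selects.narrow_congr (h : Selects f z (narrow z J p) q)
    (hq : q ∈ Set.Ioo K.1 K.2) : Selects f z (narrow z K p) q := by
  cases z <;> grind [Selects, narrow, IsLeast, IsGreatest, lowerBounds, upperBounds]

theorem Selects.narrow_of_mem (h : Selects f z I q) (hx : x ∈ Set.Ioo I.1 I.2)
    (hq : q ∈ Set.Ioo (narrow z I x).1 (narrow z I x).2) : Selects f z (narrow z I x) q :=
  h.of_subset (by cases z <;> grind [narrow]) hq

theorem Selects.letter_eq (h : Selects f z I p) : f p = some z.letter := by
  cases z <;> exact h.1.2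

theorem Selects.notMem_narrow (h : Selects f z I q) (hx : x ∈ Set.Ioo I.1 I.2)
    (hfx : f x = some z.letter) : q ∉ Set.Ioo (narrow z J x).1 (narrow z J x).2 := by
  cases z
  · exact fun hq => hq.1.not_ge (h.2 ⟨hx, hfx⟩)
  · exact fun hq => hq.2.not_ge (h.2 ⟨hx, hfx⟩)

theorem CondensedAt.nested (h : CondensedAt f w I J p) :
    I.1 ≤ J.1 ∧ J.2 ≤ I.2 ∧ p ∈ Set.Ioo J.1 J.2 := by
  induction h with
  | single h => exact ⟨le_rfl, le_rfl, h.mem_Ioo⟩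
  | @cons z z' w I J x p hx _ ih =>
    have := hx.mem_Ioo
    cases z' <;> grind [narrow]

theorem CondensedAt.unique (h : CondensedAt f w I J p) (h' : CondensedAt f w I K q) :
    J = K ∧ p = q := by
  induction h with
  | single h => cases h' with | single h' => exact ⟨rfl, h.unique h'⟩
  | cons hx _ ih => cases h' with | cons hy h' => exact ih (hx.unique hy ▸ h')

theorem Reaches.unique (h : Reaches f w I p) (h' : Reaches f w I q) : p = q :=
  (h.choose_spec.unique h'.choose_spec).2

theorem condensedAt_cons (hx : Selects f z I x) :
    CondensedAt f (z :: z' :: w) I J p ↔ CondensedAt f (z' :: w) (narrow z' I x) J p := by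
  refine ⟨fun h => ?_, .cons hx⟩
  cases h with | cons hy h => exact hx.unique hy ▸ h

theorem reaches_cons (hx : Selects f z I x) :
    Reaches f (z :: z' :: w) I p ↔ Reaches f (z' :: w) (narrow z' I x) p := by
  simp only [Reaches, condensedAt_cons hx]

theorem condensedIn_cons (hx : Selects f z I x) :
    CondensedIn f (z :: z' :: w) I ↔ CondensedIn f (z' :: w) (narrow z' I x) := by
  simp only [CondensedIn, reaches_cons hx]

theorem reaches_singleton : Reaches f [z] I p ↔ Selects f z I p := by
  constructor
  · rintro ⟨_, ⟨hp⟩⟩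
    exact hp
  · exact fun hp => ⟨I, .single hp⟩

theorem condensedIn_singleton : CondensedIn f [z] I ↔ ∃ p, Selects f z I p := by
  simp only [CondensedIn, reaches_singleton]

theorem Reaches.exists_selects (h : Reaches f (z :: w) I p) :
    ∃ x, Selects f z I x := by
  rcases h with ⟨J, hx | ⟨hx, -⟩⟩
  exacts [⟨p, hx⟩, ⟨_, hx⟩]

theorem Reaches.mem_Ioo (h : Reaches f w I p) : p ∈ Set.Ioo I.1 I.2 := by
  obtain ⟨J, h⟩ := h
  exact Set.Ioo_subset_Ioo h.nested.1 h.nested.2.1 h.nested.2.2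

theorem condensedAt_concat (hw : w ≠ []) : CondensedAt f (w ++ [z]) I K q ↔
    ∃ J p, CondensedAt f w I J p ∧ K = narrow z J p ∧ Selects f z K q := by
  induction w generalizing I with
  | nil => contradiction
  | cons z₀ w ih =>
    cases w with
    | nil =>
      constructor
      · rintro (_ | ⟨hx, ⟨hq⟩⟩)
        exact ⟨I, _, .single hx, rfl, hq⟩
      · rintro ⟨_, p, ⟨hp⟩, rfl, hq⟩
        exact .cons hp (.single hq)
    | cons z₁ w =>
      constructor
      · rintro (_ | ⟨hx, h⟩)
        obtain ⟨J, p, hp, hK⟩ := (ih (List.cons_ne_nil _ _)).1 h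
        exact ⟨J, p, .cons hx hp, hK⟩
      · rintro ⟨J, p, _ | ⟨hx, hp⟩, hK⟩
        exact .cons hx ((ih (List.cons_ne_nil _ _)).2 ⟨J, p, hp, hK⟩)

/-- The run of `w` in `L` reaches `p`, in an interval containing the part of `J` inside `L`.
For a ranker arriving at `p` with interval `J`, the run of `w` can thus replace the one of that
ranker as long as the latter stays in `L`. -/
def Tracks (f : P → Option α) (L : P × P) (w : List (RLetter α)) (J : P × P) (p : P) : Prop :=
  ∃ K, CondensedAt f w L K p ∧ K.1 ≤ max L.1 J.1 ∧ min L.2 J.2 ≤ K.2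

/-- The position `p`, reached with interval `J`, is also reached by `w` from the position `x` of
the interval `I`; for empty `w` this means `p = x`. -/
def Located (f : P → Option α) (I : P × P) (x : P) : List (RLetter α) → P × P → P → Prop
  | [], _, p => p = x
  | t :: w, J, p => Tracks f (narrow t I x) (t :: w) J p

theorem Tracks.mem_Ioo (h : Tracks f L w J p) : p ∈ Set.Ioo L.1 L.2 := by
  obtain ⟨K, hp, -⟩ := h
  exact Reaches.mem_Ioo ⟨K, hp⟩

theorem Tracks.concat (h : Tracks f L w J p)
    (hq : Selects f z (narrow z J p) q) (hqJ : q ∈ Set.Ioo J.1 J.2) (hqL : q ∈ Set.Ioo L.1 L.2) :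
    Tracks f L (w ++ [z]) (narrow z J p) q := by
  obtain ⟨K, hp, hK₁, hK₂⟩ := h
  have hw : w ≠ [] := by rintro rfl; cases hp
  refine ⟨narrow z K p, (condensedAt_concat hw).2 ⟨K, p, hp, rfl, ?_⟩, ?_⟩
  · exact hq.narrow_congr ⟨by grind, by grind⟩
  · cases z <;> grind [narrow]

theorem Tracks.mem_Ioo_of_condensedIn_concat (h : Tracks f L w J p)
    (hq : Selects f z (narrow z J p) q) (hqJ : q ∈ Set.Ioo J.1 J.2)
    (hwz : CondensedIn f (w ++ [z]) L) : q ∈ Set.Ioo L.1 L.2 := by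
  obtain ⟨K, hp, -⟩ := h
  have hw : w ≠ [] := by rintro rfl; cases hp
  obtain ⟨q', M, hq'⟩ := hwz
  obtain ⟨K', p', hp', rfl, hq'⟩ := (condensedAt_concat hw).1 hq'
  obtain ⟨rfl, rfl⟩ := hp.unique hp'
  have hK := hp.nested
  cases z <;> grind [Selects, narrow, IsLeast, IsGreatest, lowerBounds, upperBounds]

theorem located_singleton : Located f I x [z] J p ↔ Selects f z (narrow z I x) p := by
  constructor
  · rintro ⟨_, ⟨hp⟩, -⟩
    exact hp
  · exact fun hp => ⟨_, .single hp, le_max_left _ _, min_le_left _ _⟩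

theorem Located.reaches (h : Located f I x w J p) (hx : Selects f z I x) :
    Reaches f (z :: w) I p := by
  cases w with
  | nil => exact h ▸ reaches_singleton.2 hx
  | cons t w =>
    obtain ⟨K, hp, -⟩ := h
    exact ⟨K, .cons hx hp⟩

theorem Located.concat (h : Located f I x w J p) (hx : Selects f z₀ I x)
    (hq : Selects f z (narrow z J p) q) (hqJ : q ∈ Set.Ioo J.1 J.2) (hqI : q ∈ Set.Ioo I.1 I.2)
    (hw : CondensedIn f (z₀ :: (w ++ [z])) I) : Located f I x (w ++ [z]) (narrow z J p) q := by
  cases w with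
  | nil =>
    obtain rfl : p = x := h
    exact located_singleton.2 (hq.narrow_congr hqI)
  | cons t w =>
    rw [List.cons_append, condensedIn_cons hx] at hw
    exact Tracks.concat h hq hqJ (Tracks.mem_Ioo_of_condensedIn_concat h hq hqJ hw)

/-- If the next letter leaves the side of `x` on which `w` runs, it jumps across `x`. -/
theorem Located.cross (h : Located f I x w J p) (hx : Selects f z₀ I x)
    (hq : Selects f z (narrow z J p) q) (hqJ : q ∈ Set.Ioo J.1 J.2) (hqI : q ∈ Set.Ioo I.1 I.2)
    (hw : ¬ CondensedIn f (z₀ :: (w ++ [z])) I) :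
    (z.letter = z₀.letter → q = x) ∧
      (z.letter ≠ z₀.letter → Selects f z (narrow z I x) q) := by
  cases w with
  | nil =>
    obtain rfl : p = x := h
    exact absurd ⟨q, (reaches_cons hx).2 (reaches_singleton.2 (hq.narrow_congr hqI))⟩ hw
  | cons t w =>
    have hqL : q ∉ Set.Ioo (narrow t I x).1 (narrow t I x).2 := fun hqL =>
      hw ((condensedIn_cons hx).2 ⟨q, _, (Tracks.concat h hq hqJ hqL).choose_spec.1⟩)
    have hpL := Tracks.mem_Ioo h
    have hpq := hq.mem_Ioo
    have hqx : q = x ∨ x ∈ Set.Ioo (narrow z J p).1 (narrow z J p).2 ∧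
        q ∈ Set.Ioo (narrow z I x).1 (narrow z I x).2 := by
      cases z <;> cases t <;> grind [narrow]
    rcases hqx with rfl | ⟨hxp, hqx⟩
    · exact ⟨fun _ => rfl, fun hne =>
        absurd (Option.some_inj.1 (hq.letter_eq.symm.trans hx.letter_eq)) hne⟩
    · refine ⟨fun hz => absurd hqx (hq.notMem_narrow hxp (hz ▸ hx.letter_eq)), fun _ => ?_⟩
      have hnn : narrow z (narrow z J p) x = narrow z J x := by cases z <;> rfl
      refine Selects.narrow_congr (J := J) (hnn ▸ hq.narrow_of_mem hxp ?_) hqI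
      cases z <;> grind [narrow]

theorem Selects.mem_Ioo_of_narrow (hq : Selects f z (narrow z J p) q)
    (hp : p ∈ Set.Ioo J.1 J.2) : q ∈ Set.Ioo J.1 J.2 := by
  have := hq.mem_Ioo
  cases z <;> grind [narrow]

variable {Q : Type*} [LinearOrder Q] {g : Q → Option α} {I' J' : Q × Q} {p' q' x' y' : Q}
  {s w₀ : List (RLetter α)}

theorem exists_located_concat (hf : Located f I x w J p)
    (hg : Located g I' x' w J' p') (hx : Selects f z₀ I x) (hx' : Selects g z₀ I' x')
    (hq : Selects f z (narrow z J p) q) (hq' : Selects g z (narrow z J' p') q')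
    (hqJ : q ∈ Set.Ioo J.1 J.2) (hqJ' : q' ∈ Set.Ioo J'.1 J'.2)
    (hqI : q ∈ Set.Ioo I.1 I.2) (hqI' : q' ∈ Set.Ioo I'.1 I'.2)
    (hw : CondensedIn f (z₀ :: (w ++ [z])) I ↔ CondensedIn g (z₀ :: (w ++ [z])) I') :
    ∃ w', w' <:+ w ++ [z] ∧ Located f I x w' (narrow z J p) q ∧
      Located g I' x' w' (narrow z J' p') q' := by
  by_cases hc : CondensedIn f (z₀ :: (w ++ [z])) I
  · exact ⟨_, List.suffix_rfl, hf.concat hx hq hqJ hqI hc,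
      hg.concat hx' hq' hqJ' hqI' (hw.1 hc)⟩
  · have hcross := hf.cross hx hq hqJ hqI hc
    have hcross' := hg.cross hx' hq' hqJ' hqI' (mt hw.2 hc)
    by_cases hz : z.letter = z₀.letter
    · exact ⟨[], List.nil_suffix, hcross.1 hz, hcross'.1 hz⟩
    · exact ⟨[z], List.suffix_append _ _, located_singleton.2 (hcross.2 hz),
        located_singleton.2 (hcross'.2 hz)⟩

/-- The witness depends only on which rankers are condensed, whence it is common to both words. -/
theorem exists_located (hx : Selects f z₀ I x)
    (hx' : Selects g z₀ I' x') (hy : Selects f z I y) (hy' : Selects g z I' y')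
    (hw₀ : w₀ <:+ [z]) (hf₀ : Located f I x w₀ I y) (hg₀ : Located g I' x' w₀ I' y')
    (hf : CondensedAt f (z :: s) I J p) (hg : CondensedAt g (z :: s) I' J' p')
    (hH : ∀ w, w <:+: z :: s →
      (CondensedIn f (z₀ :: w) I ↔ CondensedIn g (z₀ :: w) I')) :
    ∃ w, w <:+ z :: s ∧ Located f I x w J p ∧ Located g I' x' w J' p' := by
  induction s using List.reverseRecOn generalizing J p J' p' with
  | nil =>
    obtain ⟨rfl, rfl⟩ := hf.unique (.single hy)
    obtain ⟨rfl, rfl⟩ := hg.unique (.single hy')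
    exact ⟨w₀, hw₀, hf₀, hg₀⟩
  | append_singleton s t ih =>
    rw [← List.cons_append] at hf hg hH ⊢
    obtain ⟨J, q, hfq, rfl, hq⟩ := (condensedAt_concat (List.cons_ne_nil z s)).1 hf
    obtain ⟨J', q', hgq, rfl, hq'⟩ := (condensedAt_concat (List.cons_ne_nil z s)).1 hg
    obtain ⟨w, hw, hwf, hwg⟩ := ih hfq hgq fun w hw => hH w (hw.trans ⟨[], [t], by simp⟩)
    have hwt : w ++ [t] <:+ z :: s ++ [t] := List.suffix_append_self_iff.2 hw
    have hqJ := hq.mem_Ioo_of_narrow hfq.nested.2.2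
    have hqJ' := hq'.mem_Ioo_of_narrow hgq.nested.2.2
    obtain ⟨w', hw', hloc⟩ := exists_located_concat hwf hwg hx hx' hq hq' hqJ hqJ'
      (Set.Ioo_subset_Ioo hfq.nested.1 hfq.nested.2.1 hqJ)
      (Set.Ioo_subset_Ioo hgq.nested.1 hgq.nested.2.1 hqJ')
      (hH _ hwt.isInfix)
    exact ⟨w', hw'.trans hwt, hloc⟩

/-- Two words, read in the intervals `I` and `I'`, agree on the condensedness of all rankers
starting in the direction of `z`, with at most `m` blocks and length at most `n`. -/
def AgreeFrom (z : RLetter α) (m n : ℕ) (f : P → Option α) (g : Q → Option α) (I : P × P)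
    (I' : Q × Q) : Prop :=
  ∀ t w, sameDir z t → numBlocks (t :: w) ≤ m → (t :: w).length ≤ n →
    (CondensedIn f (t :: w) I ↔ CondensedIn g (t :: w) I')

variable {t : RLetter α} {s' : List (RLetter α)} {m m' n : ℕ}

theorem AgreeFrom.congr (h : AgreeFrom z m n f g I I') (hz : sameDir z z') :
    AgreeFrom z' m n f g I I' :=
  fun t w ht => h t w ((sameDir_congr_left hz t).trans ht)

theorem AgreeFrom.narrow (h : AgreeFrom z m (n + 1) f g I I') (hx : Selects f z I x)
    (hx' : Selects g z I' x') (hm : m' + (if sameDir z t then 0 else 1) ≤ m) :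
    AgreeFrom t m' n f g (narrow t I x) (narrow t I' x') := by
  intro t' w ht hw hn
  have hzw : numBlocks (z :: t' :: w) ≤ m := by
    simp only [numBlocks, sameDir_comm z] at hm ⊢
    rw [← sameDir_congr_left ht]
    lia
  have hz : sameDir z z := by cases z <;> rfl
  simpa only [condensedIn_cons hx, condensedIn_cons hx', narrow_congr_sameDir ht] using
    h z (t' :: w) hz hzw (Nat.succ_le_succ hn)

theorem exists_reaches_of_located (hz : sameDir z z')
    (hA : AgreeFrom z m n f g I I') (hm : numBlocks (z' :: s') ≤ m)
    (hn : s'.length + 1 < n) (hx : Selects f z I x) (hx' : Selects g z I' x')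
    (hy : Selects f z' I y) (hy' : Selects g z' I' y') (hw₀ : w₀ <:+ [z'])
    (hf₀ : Located f I x w₀ I y) (hg₀ : Located g I' x' w₀ I' y')
    (hf : Reaches f (z' :: s') I p) (hg : Reaches g (z' :: s') I' p') :
    ∃ w, numBlocks (z :: w) ≤ numBlocks (z' :: s') ∧ w.length ≤ s'.length + 1 ∧
      Reaches f (z :: w) I p ∧ Reaches g (z :: w) I' p' := by
  obtain ⟨J, hf⟩ := hf
  obtain ⟨J', hg⟩ := hg
  have hzz : sameDir z z := by cases z <;> rfl
  obtain ⟨w, hw, hwf, hwg⟩ := exists_located hx hx' hy hy' hw₀ hf₀ hg₀ hf hg fun w hw =>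
    hA z w hzz ((numBlocks_cons_le_of_infix hz hw).trans hm)
      (Nat.succ_le_of_lt (hw.length_le.trans_lt hn))
  exact ⟨w, numBlocks_cons_le_of_infix hz hw.isInfix, hw.length_le, hwf.reaches hx, hwg.reaches hx'⟩

theorem exists_selects [LocallyFiniteOrder P] (hx : x ∈ Set.Ioo I.1 I.2)
    (hfx : f x = some z.letter) : ∃ p, Selects f z I p := by
  have hfin (a : α) : (Set.Ioo I.1 I.2 ∩ f ⁻¹' {some a}).Finite :=
    (Set.finite_Ioo I.1 I.2).subset Set.inter_subset_left
  cases z with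
  | X a =>
    obtain ⟨p, hp, hmin⟩ := Set.exists_min_image _ id (hfin a) ⟨x, hx, hfx⟩
    exact ⟨p, hp, hmin⟩
  | Y a =>
    obtain ⟨p, hp, hmax⟩ := Set.exists_max_image _ id (hfin a) ⟨x, hx, hfx⟩
    exact ⟨p, hp, hmax⟩

/-- Looking back from `y` for the letter at `x` decides on which side of `x` it lies. -/
theorem condensedIn_opposite_iff [LocallyFiniteOrder P] (hz : sameDir z z')
    (hx : Selects f z I x) (hy : Selects f z' I y) :
    CondensedIn f [z', z.opposite] I ↔ y ∈ Set.Ioo (narrow z I x).1 (narrow z I x).2 := by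
  rw [condensedIn_cons hy, condensedIn_singleton]
  have hyI := hy.mem_Ioo
  have hxI := hx.mem_Ioo
  constructor
  · rintro ⟨p, hp⟩
    cases z <;>
      grind [Selects, IsLeast, IsGreatest, lowerBounds, upperBounds, narrow, RLetter.opposite]
  · intro hyx
    apply exists_selects (x := x)
    · cases z <;> grind [narrow, RLetter.opposite]
    · rw [hx.letter_eq]; cases z <;> rfl

theorem mem_narrow_iff_notMem_narrow (hz : sameDir z z') (hne : z.letter ≠ z'.letter)
    (hx : Selects f z I x) (hy : Selects f z' I y) :
    x ∈ Set.Ioo (narrow z' I y).1 (narrow z' I y).2 ↔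
      y ∉ Set.Ioo (narrow z I x).1 (narrow z I x).2 := by
  have hxI := hx.mem_Ioo
  have hyI := hy.mem_Ioo
  have hfx := hx.letter_eq
  have hfy := hy.letter_eq
  cases z <;> cases z' <;> grind [narrow, sameDir]

theorem located_of_mem_narrow (hz : sameDir z z') (hx : Selects f z I x) (hy : Selects f z' I y)
    (hyx : y ∈ Set.Ioo (narrow z I x).1 (narrow z I x).2) : Located f I x [z'] I y := by
  rw [narrow_congr_sameDir hz] at hyx
  exact located_singleton.2 (hy.narrow_of_mem hx.mem_Ioo hyx)

/-- The first positions occur in the same order on both words. -/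
theorem exists_located_first [LocallyFiniteOrder P] [LocallyFiniteOrder Q] (hz : sameDir z z')
    (hH : CondensedIn f [z', z.opposite] I ↔ CondensedIn g [z', z.opposite] I')
    (hx : Selects f z I x) (hx' : Selects g z I' x') (hy : Selects f z' I y)
    (hy' : Selects g z' I' y') :
    (∃ w₀, w₀ <:+ [z'] ∧ Located f I x w₀ I y ∧ Located g I' x' w₀ I' y') ∨
      ∃ w₀, w₀ <:+ [z] ∧ Located f I y w₀ I x ∧ Located g I' y' w₀ I' x' := by
  rw [condensedIn_opposite_iff hz hx hy, condensedIn_opposite_iff hz hx' hy'] at hH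
  by_cases hne : z.letter = z'.letter
  · obtain rfl := RLetter.eq_of_sameDir hz hne
    exact .inl ⟨[], List.nil_suffix, hy.unique hx, hy'.unique hx'⟩
  by_cases h : y ∈ Set.Ioo (narrow z I x).1 (narrow z I x).2
  · exact .inl ⟨[z'], List.suffix_rfl, located_of_mem_narrow hz hx hy h,
      located_of_mem_narrow hz hx' hy' (hH.1 h)⟩
  · have hz' : sameDir z' z := sameDir_comm z z' ▸ hz
    refine .inr ⟨[z], List.suffix_rfl, located_of_mem_narrow hz' hy hx ?_,
      located_of_mem_narrow hz' hy' hx' ?_⟩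
    · exact (mem_narrow_iff_notMem_narrow hz hne hx hy).2 h
    · exact (mem_narrow_iff_notMem_narrow hz hne hx' hy').2 (mt hH.2 h)

/-- The common first letter is the one whose first position comes first in its direction. -/
theorem exists_common_head [LocallyFiniteOrder P] [LocallyFiniteOrder Q] (hz : sameDir z z')
    (hA : AgreeFrom z m n f g I I') (hm : numBlocks (z :: s) ≤ m)
    (hm' : numBlocks (z' :: s') ≤ m) (hm₂ : 2 ≤ m) (hn : s.length + s'.length + 2 ≤ n)
    (hf : Reaches f (z :: s) I p) (hg : Reaches g (z :: s) I' p')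
    (hf' : Reaches f (z' :: s') I q) (hg' : Reaches g (z' :: s') I' q') :
    ∃ z₀ w w', sameDir z₀ z ∧ numBlocks (z₀ :: w) ≤ numBlocks (z :: s) ∧
      numBlocks (z₀ :: w') ≤ numBlocks (z' :: s') ∧ w.length + w'.length < n ∧
      (Reaches f (z₀ :: w) I p ∧ Reaches g (z₀ :: w) I' p') ∧
      Reaches f (z₀ :: w') I q ∧ Reaches g (z₀ :: w') I' q' := by
  obtain ⟨x, hx⟩ := hf.exists_selects
  obtain ⟨x', hx'⟩ := hg.exists_selects
  obtain ⟨y, hy⟩ := hf'.exists_selects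
  obtain ⟨y', hy'⟩ := hg'.exists_selects
  have hz' : sameDir z' z := sameDir_comm z z' ▸ hz
  have hn₂ : 2 ≤ n := by lia
  have hH : CondensedIn f [z', z.opposite] I ↔ CondensedIn g [z', z.opposite] I' :=
    hA z' _ hz ((numBlocks_cons_le _ _).trans hm₂) hn₂
  rcases exists_located_first hz hH hx hx' hy hy' with
    ⟨w₀, hw₀, hf₀, hg₀⟩ | ⟨w₀, hw₀, hf₀, hg₀⟩
  · obtain ⟨w, hwm, hwn, hw⟩ := exists_reaches_of_located hz hA hm' (by lia)
        hx hx' hy hy' hw₀ hf₀ hg₀ hf' hg'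
    exact ⟨z, s, w, by cases z <;> rfl, le_rfl, hwm, by lia, ⟨hf, hg⟩, hw⟩
  · obtain ⟨w, hwm, hwn, hw⟩ := exists_reaches_of_located hz' (hA.congr hz) hm (by lia)
        hy hy' hx hx' hw₀ hf₀ hg₀ hf hg
    exact ⟨z', w, s', hz', hwm, le_rfl, by lia, hw, hf', hg'⟩

theorem compare_eq_compare (hlt : p < q ↔ p' < q') (hgt : q < p ↔ q' < p') :
    compare p q = compare p' q' := by
  rcases lt_trichotomy p' q' with h | rfl | h
  · rw [compare_lt_iff_lt.2 h, compare_lt_iff_lt.2 (hlt.2 h)]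
  · rw [compare_eq_iff_eq.2 rfl, compare_eq_iff_eq]
    exact le_antisymm (not_lt.1 fun h => (hgt.1 h).false) (not_lt.1 fun h => (hlt.1 h).false)
  · rw [compare_gt_iff_gt.2 h, compare_gt_iff_gt.2 (hgt.2 h)]

/-- Unless both rankers continue on the same side of their common first position, this position
separates their values. -/
theorem compare_eq_of_common_head (hx : Selects f z I x) (hx' : Selects g z I' x')
    (hf : Reaches f (z :: s) I p) (hg : Reaches g (z :: s) I' p')
    (hf' : Reaches f (z :: s') I q) (hg' : Reaches g (z :: s') I' q')
    (hsame : ∀ t t' r r', s = t :: r → s' = t' :: r' → sameDir t t' →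
      compare p q = compare p' q') : compare p q = compare p' q' := by
  rcases s with _ | ⟨t, r⟩ <;> rcases s' with _ | ⟨t', r'⟩
  · obtain rfl := hf.unique hf'
    obtain rfl := hg.unique hg'
    exact compare_eq_compare (by simp only [lt_self_iff_false]) (by simp only [lt_self_iff_false])
  · obtain rfl := (reaches_singleton.1 hf).unique hx
    obtain rfl := (reaches_singleton.1 hg).unique hx'
    have hq := ((reaches_cons hx).1 hf').mem_Ioo
    have hq' := ((reaches_cons hx').1 hg').mem_Ioo
    apply compare_eq_compare <;> cases t' <;> grind [narrow]
  · obtain rfl := (reaches_singleton.1 hf').unique hx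
    obtain rfl := (reaches_singleton.1 hg').unique hx'
    have hp := ((reaches_cons hx).1 hf).mem_Ioo
    have hp' := ((reaches_cons hx').1 hg).mem_Ioo
    apply compare_eq_compare <;> cases t <;> grind [narrow]
  · by_cases htt : sameDir t t'
    · exact hsame t t' r r' rfl rfl htt
    · have hp := ((reaches_cons hx).1 hf).mem_Ioo
      have hp' := ((reaches_cons hx').1 hg).mem_Ioo
      have hq := ((reaches_cons hx).1 hf').mem_Ioo
      have hq' := ((reaches_cons hx').1 hg').mem_Ioo
      apply compare_eq_compare <;> cases t <;> cases t' <;> grind [narrow, sameDir]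

theorem compare_eq_of_agreeFrom [LocallyFiniteOrder P] [LocallyFiniteOrder Q]
    (hz : sameDir z z') (hA : AgreeFrom z m n f g I I') (hm : numBlocks (z :: s) ≤ m)
    (hm' : numBlocks (z' :: s') ≤ m) (hsum : numBlocks (z :: s) + numBlocks (z' :: s') < 2 * m)
    (hn : s.length + s'.length + 2 ≤ n)
    (hf : Reaches f (z :: s) I p) (hg : Reaches g (z :: s) I' p')
    (hf' : Reaches f (z' :: s') I q) (hg' : Reaches g (z' :: s') I' q') :
    compare p q = compare p' q' := by
  induction n generalizing m z z' s s' I I' with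
  | zero => cases hn
  | succ n ih =>
    have hm₂ : 2 ≤ m := by
      have := one_le_numBlocks_cons z s
      have := one_le_numBlocks_cons z' s'
      lia
    obtain ⟨z₀, w, w', hz₀, hw, hw', hwn, ⟨hf, hg⟩, hf', hg'⟩ :=
      exists_common_head hz hA hm hm' hm₂ hn hf hg hf' hg'
    obtain ⟨x, hx⟩ := hf.exists_selects
    obtain ⟨x', hx'⟩ := hg.exists_selects
    refine compare_eq_of_common_head hx hx' hf hg hf' hg' ?_
    rintro t t' r r' rfl rfl ht
    rw [reaches_cons hx] at hf hf'
    rw [reaches_cons hx'] at hg hg'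
    rw [← narrow_congr_sameDir ht] at hf' hg'
    have htt' : sameDir z₀ t = sameDir z₀ t' := by
      rw [sameDir_comm z₀, sameDir_comm z₀, sameDir_congr_left ht]
    simp only [numBlocks, ← htt', List.length_cons] at hw hw' hwn
    have hA₀ : AgreeFrom z₀ m (n + 1) f g I I' := hA.congr (sameDir_comm z₀ z ▸ hz₀)
    by_cases ht₀ : sameDir z₀ t
    · rw [if_pos ht₀] at hw hw'
      exact ih ht (hA₀.narrow (m' := m) hx hx' (by lia)) (by lia) (by lia) (by lia) (by lia)
        hf hg hf' hg'
    · rw [if_neg ht₀] at hw hw'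
      exact ih ht (hA₀.narrow (m' := m - 1) hx hx' (by lia)) (by lia) (by lia) (by lia) (by lia)
        hf hg hf' hg'

end OrderedWords

section CondensedRankers

theorem head?_eq_some_iff_isLeast {P : Type*} [Preorder P] {l : List P} {p : P}
    (hl : l.Pairwise (· < ·)) : l.head? = some p ↔ IsLeast {x | x ∈ l} p := by
  cases l with
  | nil => simp [IsLeast]
  | cons b l =>
    have hb := (List.pairwise_cons.1 hl).1
    rw [List.head?_cons, Option.some_inj]
    constructor
    · rintro rfl
      exact ⟨List.mem_cons_self, fun x hx =>
        (List.mem_cons.1 hx).elim ge_of_eq fun h => (hb x h).le⟩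
    · rintro ⟨hp, hmin⟩
      refine (List.mem_cons.1 hp).elim Eq.symm fun h => ?_
      exact absurd (hb p h) (hmin List.mem_cons_self).not_gt

theorem getLast?_eq_some_iff_isGreatest {P : Type*} [Preorder P] {l : List P} {p : P}
    (hl : l.Pairwise (· < ·)) : l.getLast? = some p ↔ IsGreatest {x | x ∈ l} p := by
  rcases l.eq_nil_or_concat' with rfl | ⟨l, b, rfl⟩
  · simp [IsGreatest]
  · have hb (x : P) (hx : x ∈ l) : x < b :=
      (List.pairwise_append.1 hl).2.2 x hx b (List.mem_singleton.2 rfl)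
    rw [List.getLast?_concat, Option.some_inj]
    constructor
    · rintro rfl
      exact ⟨List.mem_concat_self, fun x hx =>
        (List.mem_append.1 hx).elim (fun h => (hb x h).le) fun h => (List.mem_singleton.1 h).le⟩
    · rintro ⟨hp, hmax⟩
      refine (List.mem_append.1 hp).elim (fun h => ?_) fun h => (List.mem_singleton.1 h).symm
      exact absurd (hb p h) (hmax List.mem_concat_self).not_gt

variable {α : Type*} {u : List α} {z : RLetter α} {w : List (RLetter α)} {I J : ℕ × ℕ}
  {m n p q : ℕ}

/-- A word as a function on positions; these are counted from `1`. -/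
def letterAt (u : List α) : ℕ → Option α
  | 0 => none
  | p + 1 => u[p]?

/-- The endpoint of an interval from which a ranker letter starts searching. -/
def entry : RLetter α → ℕ × ℕ → ℕ
  | .X _, I => I.1
  | .Y _, I => I.2

/-- The chain of intervals in the definition of a condensed ranker `r`, with `S ℓ = (i_ℓ, j_ℓ)`. The
strict inclusions are implied by `Selects`. -/
def IsIntervalChain (f : ℕ → Option α) (r : List (RLetter α)) (S : ℕ → ℕ × ℕ) : Prop :=
  ∀ ℓ z z', r[ℓ]? = some z → r[ℓ + 1]? = some z' →
    ∃ x, Selects f z (S ℓ) x ∧ S (ℓ + 1) = narrow z' (S ℓ) x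

theorem entry_narrow (z : RLetter α) (I : ℕ × ℕ) (x : ℕ) : entry z (narrow z I x) = x := by
  cases z <;> rfl

theorem startPos_eq_entry (u : List α) (z : RLetter α) :
    startPos u z = entry z (0, u.length + 1) := by
  cases z <;> rfl

theorem lt_length_add_two_of_letterAt {a : α} (h : letterAt u p = some a) : p < u.length + 2 := by
  cases p with
  | zero => lia
  | succ p =>
    have := (List.getElem?_eq_some_iff.1 h).1
    lia

theorem uRX_X_cons_iff {a : α} :
    uRX m n (.X a :: w) ↔ numBlocks (.X a :: w) ≤ m ∧ (RLetter.X a :: w).length ≤ n := by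
  constructor
  · rintro (⟨_, _, hm, hn, rfl, rfl, -⟩ | ⟨_, _, -, -, -, -, _, _, ⟨⟩⟩)
    exact ⟨hm, hn⟩
  · exact fun ⟨hm, hn⟩ => .inl ⟨_, _, hm, hn, rfl, rfl, a, w, rfl⟩

theorem uRY_Y_cons_iff {a : α} :
    uRY m n (.Y a :: w) ↔ numBlocks (.Y a :: w) ≤ m ∧ (RLetter.Y a :: w).length ≤ n := by
  constructor
  · rintro (⟨_, _, hm, hn, rfl, rfl, -⟩ | ⟨_, _, -, -, -, -, _, _, ⟨⟩⟩)
    exact ⟨hm, hn⟩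
  · exact fun ⟨hm, hn⟩ => .inl ⟨_, _, hm, hn, rfl, rfl, a, w, rfl⟩

variable [DecidableEq α]

theorem nextOcc_eq_some_iff {a : α} :
    nextOcc u a q = some p ↔ IsLeast (Set.Ioi q ∩ letterAt u ⁻¹' {some a}) p := by
  rw [nextOcc, head?_eq_some_iff_isLeast (List.pairwise_lt_range.filter _)]
  congr! 1
  ext i
  cases i with
  | zero => simp
  | succ i =>
    have (h : u[i]? = some a) := lt_length_add_two_of_letterAt (p := i + 1) h
    simpa [letterAt] using fun _ h => this h

theorem prevOcc_eq_some_iff {a : α} :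
    prevOcc u a q = some p ↔ IsGreatest (Set.Iio q ∩ letterAt u ⁻¹' {some a}) p := by
  rw [prevOcc, getLast?_eq_some_iff_isGreatest (List.pairwise_lt_range.filter _)]
  congr! 1
  ext i
  cases i with
  | zero => simp [letterAt]
  | succ i =>
    have (h : u[i]? = some a) := lt_length_add_two_of_letterAt (p := i + 1) h
    simpa [letterAt] using fun _ h => this h

theorem selects_letterAt_iff :
    Selects (letterAt u) z I p ↔ stepR u z (entry z I) = some p ∧ p ∈ Set.Ioo I.1 I.2 := by
  cases z with
  | X a =>
    rw [stepR, nextOcc_eq_some_iff]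
    grind [Selects, IsLeast, lowerBounds, entry]
  | Y a =>
    rw [stepR, prevOcc_eq_some_iff]
    grind [Selects, IsGreatest, upperBounds, entry]

theorem condensedAt_iff_exists_chain : CondensedAt (letterAt u) (z :: w) I J p ↔
    ∃ S, S 0 = I ∧ S w.length = J ∧ IsIntervalChain (letterAt u) (z :: w) S ∧
      evalFrom u (z :: w) (entry z I) = some p ∧ p ∈ Set.Ioo J.1 J.2 := by
  induction w generalizing z I with
  | nil =>
    constructor
    · rintro ⟨hp⟩
      obtain ⟨hstep, hpI⟩ := selects_letterAt_iff.1 hp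
      exact ⟨fun _ => J, rfl, rfl, by simp [IsIntervalChain], by simp [evalFrom, hstep], hpI⟩
    · rintro ⟨S, rfl, rfl, -, heval, hp⟩
      exact .single (selects_letterAt_iff.2 ⟨by simpa [evalFrom] using heval, hp⟩)
  | cons z' w ih =>
    constructor
    · intro h
      obtain ⟨x, hx⟩ := Reaches.exists_selects ⟨J, h⟩
      obtain ⟨S, hS₀, hSJ, hS, heval, hp⟩ := ih.1 ((condensedAt_cons hx).1 h)
      refine ⟨fun ℓ => ℓ.casesOn I S, rfl, hSJ, ?_, ?_, hp⟩
      · rintro (_ | ℓ) t t' ht ht'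
        · cases ht; cases ht'
          exact ⟨_, hx, hS₀⟩
        · exact hS ℓ t t' ht ht'
      · rw [entry_narrow] at heval
        simpa [evalFrom, (selects_letterAt_iff.1 hx).1] using heval
    · rintro ⟨S, rfl, rfl, hS, heval, hp⟩
      obtain ⟨x, hx, hS₁⟩ := hS 0 z z' rfl rfl
      refine .cons hx (ih.2 ⟨fun ℓ => S (ℓ + 1), hS₁, rfl, fun ℓ => hS (ℓ + 1), ?_, hp⟩)
      rw [entry_narrow]
      simpa [evalFrom, (selects_letterAt_iff.1 hx).1] using heval

theorem Condensed.exists_chain (h : Condensed u (z :: w)) :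
    ∃ p S, evalR u (z :: w) = some p ∧ S 0 = (0, u.length + 1) ∧
      IsIntervalChain (letterAt u) (z :: w) S ∧ p ∈ Set.Ioo (S w.length).1 (S w.length).2 := by
  obtain ⟨p, i, j, heval, hi₀, hj₀, hXX, hYY, hXY, hYX, hsub, hp⟩ := h
  refine ⟨p, fun ℓ => (i ℓ, j ℓ), heval, Prod.ext hi₀ hj₀, fun ℓ t t' ht ht' => ?_, hp⟩
  have hlt (ℓ : ℕ) (hℓ : ℓ ≤ w.length) : i ℓ < j ℓ := by
    induction hℓ using Nat.decreasingInduction with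
    | self => exact hp.1.trans hp.2
    | of_succ ℓ hℓ ih =>
      obtain ⟨hi, hj, -⟩ := hsub (ℓ + 1) (Nat.le_add_left 1 ℓ) (Nat.succ_lt_succ hℓ)
      exact hi.trans_lt (ih.trans_le hj)
  have hℓ : ℓ + 1 < (z :: w).length := (List.getElem?_eq_some_iff.1 ht').1
  have hij := hlt (ℓ + 1) (Nat.le_of_lt_succ hℓ)
  have hℓ₁ : 1 ≤ ℓ + 1 := Nat.le_add_left 1 ℓ
  obtain ⟨hi, hj, hstrict⟩ := hsub (ℓ + 1) hℓ₁ hℓ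
  rw [Nat.add_sub_cancel] at hi hj hstrict
  simp only [selects_letterAt_iff, Set.mem_Ioo]
  rcases t with a | a <;> rcases t' with b | b
  · obtain ⟨hx, hx'⟩ := hXX (ℓ + 1) a b hℓ₁ ht ht'
    exact ⟨i (ℓ + 1), ⟨hx, by grind⟩, Prod.ext rfl hx'⟩
  · obtain ⟨hx', hx⟩ := hXY (ℓ + 1) a b hℓ₁ ht ht'
    exact ⟨j (ℓ + 1), ⟨hx, by grind⟩, Prod.ext hx' rfl⟩
  · obtain ⟨hx, hx'⟩ := hYX (ℓ + 1) a b hℓ₁ ht ht'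
    exact ⟨i (ℓ + 1), ⟨hx, by grind⟩, Prod.ext rfl hx'⟩
  · obtain ⟨hx', hx⟩ := hYY (ℓ + 1) a b hℓ₁ ht ht'
    exact ⟨j (ℓ + 1), ⟨hx, by grind⟩, Prod.ext hx' rfl⟩

theorem condensed_of_chain {S : ℕ → ℕ × ℕ} (heval : evalR u (z :: w) = some p)
    (hS₀ : S 0 = (0, u.length + 1)) (hS : IsIntervalChain (letterAt u) (z :: w) S)
    (hp : p ∈ Set.Ioo (S w.length).1 (S w.length).2) : Condensed u (z :: w) := by
  have hstep (ℓ : ℕ) (t t' : RLetter α) (ht : (z :: w)[ℓ]? = some t)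
      (ht' : (z :: w)[ℓ + 1]? = some t') : ∃ x, stepR u t (entry t (S ℓ)) = some x ∧
        x ∈ Set.Ioo (S ℓ).1 (S ℓ).2 ∧ S (ℓ + 1) = narrow t' (S ℓ) x := by
    obtain ⟨x, hx, hx'⟩ := hS ℓ t t' ht ht'
    exact ⟨x, (selects_letterAt_iff.1 hx).1, (selects_letterAt_iff.1 hx).2, hx'⟩
  refine ⟨p, fun ℓ => (S ℓ).1, fun ℓ => (S ℓ).2, heval, congrArg Prod.fst hS₀,
    congrArg Prod.snd hS₀, ?_, ?_, ?_, ?_, ?_, hp⟩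
  iterate 4
    rintro (_ | ℓ) a b hℓ ha hb
    · contradiction
    · obtain ⟨x, hx, -, hSx⟩ := hstep ℓ _ _ ha hb
      simp_all [narrow, stepR, entry]
  rintro (_ | ℓ) hℓ hℓw
  · contradiction
  · obtain ⟨x, -, hx, hSx⟩ := hstep ℓ _ _ (List.getElem?_eq_getElem (Nat.lt_of_succ_lt hℓw))
      (List.getElem?_eq_getElem hℓw)
    dsimp only
    rw [hSx, Nat.add_sub_cancel]
    cases (z :: w)[ℓ + 1] <;> grind [narrow]

theorem Condensed.reaches_pos (h : Condensed u (z :: w)) :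
    Reaches (letterAt u) (z :: w) (0, u.length + 1) (pos u (z :: w)) := by
  obtain ⟨p, S, heval, hS₀, hS, hp⟩ := h.exists_chain
  rw [pos, heval]
  rw [evalR, startPos_eq_entry] at heval
  exact ⟨_, condensedAt_iff_exists_chain.2 ⟨S, hS₀, rfl, hS, heval, hp⟩⟩

theorem condensed_iff_condensedIn :
    Condensed u (z :: w) ↔ CondensedIn (letterAt u) (z :: w) (0, u.length + 1) := by
  refine ⟨fun h => ⟨_, h.reaches_pos⟩, ?_⟩
  rintro ⟨p, J, h⟩
  obtain ⟨S, hS₀, rfl, hS, heval, hp⟩ := condensedAt_iff_exists_chain.1 h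
  exact condensed_of_chain (by rw [evalR, startPos_eq_entry, heval]) hS₀ hS hp

variable {v : List α}

theorem agreeFrom_of_trir (h : trir m n u v) (a : α) :
    AgreeFrom (.X a) m n (letterAt u) (letterAt v) (0, u.length + 1) (0, v.length + 1) := by
  rintro (b | b) w ⟨⟩ hm hn
  simpa only [condensed_iff_condensedIn] using h _ (uRX_X_cons_iff.2 ⟨hm, hn⟩)

theorem agreeFrom_of_tril (h : tril m n u v) (a : α) :
    AgreeFrom (.Y a) m n (letterAt u) (letterAt v) (0, u.length + 1) (0, v.length + 1) := by
  rintro (b | b) w ⟨⟩ hm hn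
  simpa only [condensed_iff_condensedIn] using h _ (uRY_Y_cons_iff.2 ⟨hm, hn⟩)

theorem compare_pos_eq_of_agreeFrom {z' : RLetter α} {w' : List (RLetter α)} (hz : sameDir z z')
    (hA : AgreeFrom z m n (letterAt u) (letterAt v) (0, u.length + 1) (0, v.length + 1))
    (hm : numBlocks (z :: w) ≤ m) (hm' : numBlocks (z' :: w') < m)
    (hn : (z :: w).length + (z' :: w').length ≤ n)
    (hu : Condensed u (z :: w)) (hv : Condensed v (z :: w))
    (hu' : Condensed u (z' :: w')) (hv' : Condensed v (z' :: w')) :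
    compare (pos u (z :: w)) (pos u (z' :: w')) = compare (pos v (z :: w)) (pos v (z' :: w')) :=
  compare_eq_of_agreeFrom hz hA hm hm'.le (by lia)
    (by simp only [List.length_cons] at hn; lia)
    hu.reaches_pos hv.reaches_pos hu'.reaches_pos hv'.reaches_pos

end CondensedRankers

/-- Order comparison of condensed rankers starting with the same
direction. -/
theorem statement14 (m n : ℕ) (hm : 2 ≤ m) (hmn : m ≤ n) (u v : List A) :
    (∀ (a b : A) (s s' : List (RLetter A)),
       uRXm m (RLetter.X a :: s) → uRXm (m-1) (RLetter.X b :: s') →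
       (RLetter.X a :: s).length + (RLetter.X b :: s').length ≤ n →
       Condensed u (RLetter.X a :: s) → Condensed v (RLetter.X a :: s) →
       Condensed u (RLetter.X b :: s') → Condensed v (RLetter.X b :: s') →
       trir m n u v →
       compare (pos u (RLetter.X a :: s)) (pos u (RLetter.X b :: s')) =
         compare (pos v (RLetter.X a :: s)) (pos v (RLetter.X b :: s'))) ∧
    (∀ (a b : A) (s s' : List (RLetter A)),
       uRYm m (RLetter.Y a :: s) → uRYm (m-1) (RLetter.Y b :: s') →
       (RLetter.Y a :: s).length + (RLetter.Y b :: s').length ≤ n →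
       Condensed u (RLetter.Y a :: s) → Condensed v (RLetter.Y a :: s) →
       Condensed u (RLetter.Y b :: s') → Condensed v (RLetter.Y b :: s') →
       tril m n u v →
       compare (pos u (RLetter.Y a :: s)) (pos u (RLetter.Y b :: s')) =
         compare (pos v (RLetter.Y a :: s)) (pos v (RLetter.Y b :: s'))) := by
  constructor
  · rintro a b s s' ⟨_, -, hr⟩ ⟨_, -, hr'⟩ hlen hu hv hu' hv' huv
    have hm' := (uRX_X_cons_iff.1 hr').1
    exact compare_pos_eq_of_agreeFrom rfl (agreeFrom_of_trir huv a) (uRX_X_cons_iff.1 hr).1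
      (by lia) hlen hu hv hu' hv'
  · rintro a b s s' ⟨_, -, hr⟩ ⟨_, -, hr'⟩ hlen hu hv hu' hv' huv
    have hm' := (uRY_Y_cons_iff.1 hr').1
    exact compare_pos_eq_of_agreeFrom rfl (agreeFrom_of_tril huv a) (uRY_Y_cons_iff.1 hr).1
      (by lia) hlen hu hv hu' hv'

end RankerPaper
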